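/- Fix U > 0, σ₁, σ₂ > 0 and 0 < K < U. Suppose Σ : (0,∞) → (0,∞) satisfies C^bs(U, K, τ, Σ(τ)) = C^σ(U,K,τ) for all τ > 0, i.e. Σ(τ) is the Black–Scholes implied volatility of the PCLVG call price with strike K and time to maturity τ. Then lim_{τ→0+} Σ(τ) = √σ₁ · log(U/K) / √(2(U−K)). -/

import Mathlib

open MeasureTheory Filter Set

/-- Standard normal cumulative distribution function. -/
noncomputable def stdNormalCDF (x : ℝ) : ℝ :=
  (Real.sqrt (2 * Real.pi))⁻¹ * ∫ y in Set.Iic x, Real.exp (-(y ^ 2) / 2)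

/-- Black–Scholes call price with zero interest and dividend rates. -/
noncomputable def bsCall (S K τ σ : ℝ) : ℝ :=
  let d1 := (Real.log (S / K) + σ ^ 2 * τ / 2) / (σ * Real.sqrt τ)
  S * stdNormalCDF d1 - K * stdNormalCDF (d1 - σ * Real.sqrt τ)

/-- Black–Scholes put price with zero interest and dividend rates. -/
noncomputable def bsPut (S K τ σ : ℝ) : ℝ := bsCall S K τ σ - S + K

/-- The denominator appearing in the PCLVG call price formula. -/
noncomputable def pclvgD (σ1 σ2 U τ : ℝ) : ℝ :=
  1 / σ1 + 1 / σ2 - (1 / σ2 - 1 / σ1) * Real.exp (-2 * U / (σ1 * τ))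

/-- The explicit PCLVG call price `C^σ(U,K,τ)`. -/
noncomputable def pclvgCall (σ1 σ2 U K τ : ℝ) : ℝ :=
  if K < U then
    (U - K) +
      τ * Real.exp (-(U - K) / (σ1 * τ)) * (1 - Real.exp (-2 * K / (σ1 * τ))) /
        pclvgD σ1 σ2 U τ
  else
    τ * Real.exp (-(K - U) / (σ2 * τ)) * (1 - Real.exp (-2 * U / (σ1 * τ))) /
      pclvgD σ1 σ2 U τ

/-- The PCLVG put price `P^σ(U,K,τ) = C^σ(U,K,τ) − (U − K)`. -/
noncomputable def pclvgPut (σ1 σ2 U K τ : ℝ) : ℝ := pclvgCall σ1 σ2 U K τ - (U - K)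

/-!
In the total volatility `v = σ √τ` the price `p v` of the out-of-the-money put is increasing, with
limit `0` at `0+` and derivative `S φ (log (S / K) / v + v / 2)`, where `φ` is the standard normal
density. Bounding this derivative on `(0, v]` from above and on `[v (1 - v), v]` from below gives
`v² log (p v) → -log (S / K)² / 2`. The PCLVG put price `P τ` satisfies
`τ log (P τ) → -(U - K) / σ₁`. At the implied volatility `p (Σ √τ) = P τ`; hence `Σ √τ → 0`, and
dividing the first limit by the second gives `Σ² → σ₁ log (U / K)² / (2 (U - K))`.
-/

open ProbabilityTheory Topology

lemma tendsto_nhdsGT_of_monotoneOn {ι X Y : Type*} [LinearOrder X] [TopologicalSpace X]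
    [OrderTopology X] [LinearOrder Y] [TopologicalSpace Y] [OrderTopology Y] {l : Filter ι}
    {f : X → Y} {u : ι → X} {a : X} {b : Y} (hf : MonotoneOn f (Ioi a))
    (hfb : ∀ x, a < x → b < f x) (hu : ∀ᶠ i in l, a < u i)
    (hfu : Tendsto (fun i => f (u i)) l (𝓝 b)) : Tendsto u l (𝓝[>] a) := by
  refine tendsto_nhdsWithin_iff.2 ⟨tendsto_order.2 ⟨fun x hx => ?_, fun x hx => ?_⟩, hu⟩
  · filter_upwards [hu] with i hi using hx.trans hi
  · filter_upwards [hu, hfu.eventually_lt_const (hfb x hx)] with i hi hlt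
    exact lt_of_not_ge fun hxu => (hf hx hi hxu).not_gt hlt

lemma hasDerivAt_integral_Iic {E : Type*} [NormedAddCommGroup E] [NormedSpace ℝ E]
    [CompleteSpace E] {f : ℝ → E} {x : ℝ} (hf : Integrable f) (hx : ContinuousAt f x) :
    HasDerivAt (fun u => ∫ y in Iic u, f y) (f x) x := by
  have hprim := (intervalIntegral.integral_hasDerivAt_right (hf.intervalIntegrable (a := 0))
    hf.aestronglyMeasurable.stronglyMeasurableAtFilter hx).const_add (∫ y in Iic 0, f y)
  refine hprim.congr_of_eventuallyEq (Eventually.of_forall fun u => ?_)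
  exact (add_eq_of_eq_sub' (intervalIntegral.integral_Iic_sub_Iic
    hf.integrableOn hf.integrableOn).symm).symm

lemma tendsto_exp_div_nhdsGT_zero {a : ℝ} (ha : a < 0) :
    Tendsto (fun τ : ℝ => Real.exp (a / τ)) (𝓝[>] 0) (𝓝 0) := by
  simp only [div_eq_mul_inv]
  exact Real.tendsto_exp_atBot.comp (tendsto_inv_nhdsGT_zero.const_mul_atTop_of_neg ha)

lemma tendsto_zero_of_tendsto_mul_log {f : ℝ → ℝ} {c : ℝ} (hc : 0 < c)
    (hf : ∀ᶠ τ in 𝓝[>] 0, 0 < f τ)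
    (h : Tendsto (fun τ => τ * Real.log (f τ)) (𝓝[>] 0) (𝓝 (-c))) :
    Tendsto f (𝓝[>] 0) (𝓝 0) := by
  have hlog : Tendsto (fun τ => τ⁻¹ * (τ * Real.log (f τ))) (𝓝[>] 0) atBot :=
    tendsto_inv_nhdsGT_zero.atTop_mul_neg (neg_neg_of_pos hc) h
  refine (Real.tendsto_exp_atBot.comp hlog).congr' ?_
  filter_upwards [hf, self_mem_nhdsWithin] with τ hfτ hτ
  rw [Function.comp_apply, inv_mul_cancel_left₀ (ne_of_gt hτ), Real.exp_log hfτ]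

lemma gaussianPDFReal_zero_one (x : ℝ) :
    gaussianPDFReal 0 1 x = (Real.sqrt (2 * Real.pi))⁻¹ * Real.exp (-(x ^ 2) / 2) := by
  simp [gaussianPDFReal]

lemma gaussianPDFReal_zero_one_pos (x : ℝ) : 0 < gaussianPDFReal 0 1 x :=
  gaussianPDFReal_pos 0 1 x one_ne_zero

lemma antitoneOn_gaussianPDFReal_zero_one : AntitoneOn (gaussianPDFReal 0 1) (Ici 0) := by
  intro x hx y _ hxy
  have : 0 ≤ x := hx
  rw [gaussianPDFReal_zero_one, gaussianPDFReal_zero_one]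
  gcongr

lemma log_gaussianPDFReal_zero_one (x : ℝ) :
    Real.log (gaussianPDFReal 0 1 x) = -Real.log (Real.sqrt (2 * Real.pi)) - x ^ 2 / 2 := by
  rw [gaussianPDFReal_zero_one, Real.log_mul (by positivity) (Real.exp_ne_zero _), Real.log_inv,
    Real.log_exp, neg_div, sub_eq_add_neg]

lemma stdNormalCDF_eq_integral_gaussianPDFReal (x : ℝ) :
    stdNormalCDF x = ∫ y in Iic x, gaussianPDFReal 0 1 y := by
  simp only [stdNormalCDF, gaussianPDFReal_zero_one, integral_const_mul]

lemma hasDerivAt_stdNormalCDF (x : ℝ) : HasDerivAt stdNormalCDF (gaussianPDFReal 0 1 x) x := by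
  rw [funext stdNormalCDF_eq_integral_gaussianPDFReal]
  refine hasDerivAt_integral_Iic (integrable_gaussianPDFReal 0 1) (Continuous.continuousAt ?_)
  rw [funext gaussianPDFReal_zero_one]
  fun_prop

lemma tendsto_stdNormalCDF_atTop : Tendsto stdNormalCDF atTop (𝓝 1) := by
  rw [funext stdNormalCDF_eq_integral_gaussianPDFReal,
    ← integral_gaussianPDFReal_eq_one 0 one_ne_zero]
  exact (aecover_Iic tendsto_id).integral_tendsto_of_countably_generated
    (integrable_gaussianPDFReal 0 1)

/-- The Black–Scholes put price as a function of the total volatility `v = σ √τ`, through which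
alone it depends on the volatility `σ` and the maturity `τ` (see `bsPut_eq_bsTotalVolPut`). -/
noncomputable def bsTotalVolPut (S K v : ℝ) : ℝ :=
  S * stdNormalCDF (Real.log (S / K) / v + v / 2)
    - K * stdNormalCDF (Real.log (S / K) / v - v / 2) - S + K

lemma bsPut_eq_bsTotalVolPut (S K σ : ℝ) {τ : ℝ} (hτ : 0 ≤ τ) :
    bsPut S K τ σ = bsTotalVolPut S K (σ * Real.sqrt τ) := by
  have hd1 : (Real.log (S / K) + σ ^ 2 * τ / 2) / (σ * Real.sqrt τ)
      = Real.log (S / K) / (σ * Real.sqrt τ) + σ * Real.sqrt τ / 2 := by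
    rw [show σ ^ 2 * τ = (σ * Real.sqrt τ) ^ 2 by rw [mul_pow, Real.sq_sqrt hτ], add_div,
      div_right_comm, sq, mul_self_div_self]
  simp only [bsPut, bsCall, bsTotalVolPut, hd1, add_sub_assoc]
  ring_nf

section TotalVolatility

variable {S K : ℝ}

lemma strike_mul_gaussianPDFReal (hS : 0 < S) (hK : 0 < K) {v : ℝ} (hv : v ≠ 0) :
    K * gaussianPDFReal 0 1 (Real.log (S / K) / v - v / 2)
      = S * gaussianPDFReal 0 1 (Real.log (S / K) / v + v / 2) := by
  have hexp : K * Real.exp (-((Real.log (S / K) / v - v / 2) ^ 2) / 2)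
      = S * Real.exp (-((Real.log (S / K) / v + v / 2) ^ 2) / 2) := by
    nth_rewrite 2 [show S = K * Real.exp (Real.log (S / K)) by
      rw [Real.exp_log (div_pos hS hK), mul_div_cancel₀ _ hK.ne']]
    rw [mul_assoc, ← Real.exp_add]
    congr 2
    field_simp
    ring
  simp only [gaussianPDFReal_zero_one, mul_left_comm _ (Real.sqrt (2 * Real.pi))⁻¹, hexp]

lemma hasDerivAt_bsTotalVolPut (hS : 0 < S) (hK : 0 < K) {v : ℝ} (hv : v ≠ 0) :
    HasDerivAt (bsTotalVolPut S K)
      (S * gaussianPDFReal 0 1 (Real.log (S / K) / v + v / 2)) v := by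
  have hdiv : HasDerivAt (fun v => Real.log (S / K) / v) (Real.log (S / K) * -(v ^ 2)⁻¹) v := by
    simpa only [div_eq_mul_inv] using (hasDerivAt_inv hv).const_mul (Real.log (S / K))
  have hhalf : HasDerivAt (fun v : ℝ => v / 2) (1 / 2) v := (hasDerivAt_id v).div_const 2
  have hd1 := ((hasDerivAt_stdNormalCDF _).comp v (hdiv.add hhalf)).const_mul S
  have hd2 := ((hasDerivAt_stdNormalCDF _).comp v (hdiv.sub hhalf)).const_mul K
  refine (((hd1.sub hd2).sub_const S).add_const K).congr_deriv ?_
  linear_combination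
    -(Real.log (S / K) * -(v ^ 2)⁻¹ - 1 / 2) * strike_mul_gaussianPDFReal hS hK hv

lemma continuousOn_bsTotalVolPut (hS : 0 < S) (hK : 0 < K) :
    ContinuousOn (bsTotalVolPut S K) (Ioi 0) := fun _ hv =>
  (hasDerivAt_bsTotalVolPut hS hK (ne_of_gt hv)).continuousAt.continuousWithinAt

lemma strictMonoOn_bsTotalVolPut (hS : 0 < S) (hK : 0 < K) :
    StrictMonoOn (bsTotalVolPut S K) (Ioi 0) := by
  refine strictMonoOn_of_deriv_pos (convex_Ioi 0) (continuousOn_bsTotalVolPut hS hK) ?_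
  intro v hv
  rw [interior_Ioi] at hv
  rw [(hasDerivAt_bsTotalVolPut hS hK (ne_of_gt hv)).deriv]
  exact mul_pos hS (gaussianPDFReal_zero_one_pos _)

lemma exists_bsTotalVolPut_sub_eq (hS : 0 < S) (hK : 0 < K) {w v : ℝ} (hw : 0 < w)
    (hwv : w < v) :
    ∃ u ∈ Ioo w v, bsTotalVolPut S K v - bsTotalVolPut S K w
      = (v - w) * (S * gaussianPDFReal 0 1 (Real.log (S / K) / u + u / 2)) := by
  obtain ⟨u, hu, hslope⟩ := exists_hasDerivAt_eq_slope (bsTotalVolPut S K) _ hwv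
    ((continuousOn_bsTotalVolPut hS hK).mono fun x hx => hw.trans_le hx.1)
    fun x hx => hasDerivAt_bsTotalVolPut hS hK (hw.trans hx.1).ne'
  exact ⟨u, hu, by rw [hslope, mul_div_cancel₀ _ (sub_pos.2 hwv).ne']⟩

lemma log_div_pos_of_lt (hK : 0 < K) (hKS : K < S) : 0 < Real.log (S / K) :=
  Real.log_pos ((one_lt_div hK).2 hKS)

lemma tendsto_bsTotalVolPut_zero (hK : 0 < K) (hKS : K < S) :
    Tendsto (bsTotalVolPut S K) (𝓝[>] 0) (𝓝 0) := by
  have hdiv : Tendsto (fun v : ℝ => Real.log (S / K) / v) (𝓝[>] 0) atTop := by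
    simpa only [div_eq_mul_inv] using
      tendsto_inv_nhdsGT_zero.const_mul_atTop (log_div_pos_of_lt hK hKS)
  have hhalf : Tendsto (fun v : ℝ => v / 2) (𝓝[>] 0) (𝓝 0) :=
    ((continuous_id.div_const 2).tendsto' 0 0 (zero_div 2)).mono_left nhdsWithin_le_nhds
  have hd1 := (tendsto_stdNormalCDF_atTop.comp (hdiv.atTop_add hhalf)).const_mul S
  have hd2 := (tendsto_stdNormalCDF_atTop.comp (hdiv.atTop_add hhalf.neg)).const_mul K
  convert ((hd1.sub hd2).sub_const S).add_const K using 2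
  · simp only [bsTotalVolPut, Function.comp_apply, sub_eq_add_neg]
  · ring

lemma bsTotalVolPut_pos (hK : 0 < K) (hKS : K < S) {v : ℝ} (hv : 0 < v) :
    0 < bsTotalVolPut S K v := by
  have hmono := strictMonoOn_bsTotalVolPut (hK.trans hKS) hK
  have hhalf : 0 ≤ bsTotalVolPut S K (v / 2) := by
    refine le_of_tendsto (tendsto_bsTotalVolPut_zero hK hKS) ?_
    filter_upwards [Ioo_mem_nhdsGT (half_pos hv)] with w hw
    exact (hmono hw.1 (half_pos hv) hw.2).le
  exact hhalf.trans_lt (hmono (half_pos hv) hv (half_lt_self hv))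

lemma bsTotalVolPut_le (hK : 0 < K) (hKS : K < S) {v : ℝ} (hv : 0 < v) :
    bsTotalVolPut S K v ≤ v * (S * gaussianPDFReal 0 1 (Real.log (S / K) / v)) := by
  have hS := hK.trans hKS
  have hL := log_div_pos_of_lt hK hKS
  have hlim := (tendsto_bsTotalVolPut_zero hK hKS).const_add
    (v * (S * gaussianPDFReal 0 1 (Real.log (S / K) / v)))
  rw [add_zero] at hlim
  refine ge_of_tendsto hlim ?_
  filter_upwards [Ioo_mem_nhdsGT hv] with w ⟨hw, hwv⟩
  obtain ⟨u, ⟨hwu, huv⟩, hsub⟩ := exists_bsTotalVolPut_sub_eq hS hK hw hwv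
  have hu : 0 < u := hw.trans hwu
  have harg : Real.log (S / K) / v ≤ Real.log (S / K) / u + u / 2 :=
    calc Real.log (S / K) / v ≤ Real.log (S / K) / u := by gcongr
      _ ≤ Real.log (S / K) / u + u / 2 := by linarith
  have hpdf : gaussianPDFReal 0 1 (Real.log (S / K) / u + u / 2)
      ≤ gaussianPDFReal 0 1 (Real.log (S / K) / v) :=
    antitoneOn_gaussianPDFReal_zero_one (mem_Ici.2 (by positivity)) (mem_Ici.2 (by positivity)) harg
  rw [← sub_le_iff_le_add, hsub]
  have hpos := gaussianPDFReal_zero_one_pos (Real.log (S / K) / u + u / 2)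
  gcongr
  linarith

lemma le_bsTotalVolPut (hK : 0 < K) (hKS : K < S) {w v : ℝ} (hw : 0 < w) (hwv : w < v) :
    (v - w) * (S * gaussianPDFReal 0 1 (Real.log (S / K) / w + v / 2)) ≤ bsTotalVolPut S K v := by
  have hS := hK.trans hKS
  have hL := log_div_pos_of_lt hK hKS
  obtain ⟨u, ⟨hwu, huv⟩, hsub⟩ := exists_bsTotalVolPut_sub_eq hS hK hw hwv
  have hu : 0 < u := hw.trans hwu
  have hpdf : gaussianPDFReal 0 1 (Real.log (S / K) / w + v / 2)
      ≤ gaussianPDFReal 0 1 (Real.log (S / K) / u + u / 2) :=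
    antitoneOn_gaussianPDFReal_zero_one (mem_Ici.2 (by positivity))
      (mem_Ici.2 (add_pos (by positivity) (half_pos (hw.trans hwv))).le) (by gcongr)
  calc (v - w) * (S * gaussianPDFReal 0 1 (Real.log (S / K) / w + v / 2))
      ≤ (v - w) * (S * gaussianPDFReal 0 1 (Real.log (S / K) / u + u / 2)) := by
        have := sub_pos.2 hwv
        gcongr
    _ = bsTotalVolPut S K v - bsTotalVolPut S K w := hsub.symm
    _ ≤ bsTotalVolPut S K v := sub_le_self _ (bsTotalVolPut_pos hK hKS hw).le

lemma sq_mul_log_bsTotalVolPut_le (hK : 0 < K) (hKS : K < S) {v : ℝ} (hv : 0 < v) :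
    v ^ 2 * Real.log (bsTotalVolPut S K v)
      ≤ v * (v * Real.log v) + v ^ 2 * (Real.log S - Real.log (Real.sqrt (2 * Real.pi)))
        - Real.log (S / K) ^ 2 / 2 := by
  have hpdf := gaussianPDFReal_zero_one_pos (Real.log (S / K) / v)
  calc v ^ 2 * Real.log (bsTotalVolPut S K v)
      ≤ v ^ 2 * Real.log (v * (S * gaussianPDFReal 0 1 (Real.log (S / K) / v))) := by
        gcongr
        · exact bsTotalVolPut_pos hK hKS hv
        · exact bsTotalVolPut_le hK hKS hv
    _ = _ := by
        rw [Real.log_mul hv.ne' (mul_pos (hK.trans hKS) hpdf).ne',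
          Real.log_mul (hK.trans hKS).ne' hpdf.ne', log_gaussianPDFReal_zero_one]
        field_simp
        ring

lemma le_sq_mul_log_bsTotalVolPut (hK : 0 < K) (hKS : K < S) {v : ℝ} (hv : 0 < v) (hv1 : v < 1) :
    2 * (v * (v * Real.log v)) + v ^ 2 * (Real.log S - Real.log (Real.sqrt (2 * Real.pi)))
        - (Real.log (S / K) / (1 - v) + v ^ 2 / 2) ^ 2 / 2
      ≤ v ^ 2 * Real.log (bsTotalVolPut S K v) := by
  have hv1' : 0 < 1 - v := sub_pos.2 hv1
  have hpdf := gaussianPDFReal_zero_one_pos (Real.log (S / K) / (v * (1 - v)) + v / 2)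
  have hSpdf := mul_pos (hK.trans hKS) hpdf
  -- With lower endpoint `w = v (1 - v)` the interval length `v ^ 2` is negligible after taking
  -- logarithms, while `w / v → 1` keeps the leading constant sharp.
  have hle : v ^ 2 * (S * gaussianPDFReal 0 1 (Real.log (S / K) / (v * (1 - v)) + v / 2))
      ≤ bsTotalVolPut S K v := by
    have h := le_bsTotalVolPut hK hKS (mul_pos hv hv1') (mul_lt_of_lt_one_right hv (by linarith))
    rwa [show v - v * (1 - v) = v ^ 2 by ring] at h
  calc _ = v ^ 2 * Real.log
        (v ^ 2 * (S * gaussianPDFReal 0 1 (Real.log (S / K) / (v * (1 - v)) + v / 2))) := by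
        rw [Real.log_mul (pow_ne_zero 2 hv.ne') hSpdf.ne', Real.log_mul (hK.trans hKS).ne' hpdf.ne',
          Real.log_pow, log_gaussianPDFReal_zero_one]
        field_simp
        ring
    _ ≤ v ^ 2 * Real.log (bsTotalVolPut S K v) := by gcongr

lemma tendsto_sq_mul_log_bsTotalVolPut (hK : 0 < K) (hKS : K < S) :
    Tendsto (fun v => v ^ 2 * Real.log (bsTotalVolPut S K v)) (𝓝[>] 0)
      (𝓝 (-(Real.log (S / K) ^ 2 / 2))) := by
  have hlog : Tendsto (fun v => v * (v * Real.log v)) (𝓝[>] 0) (𝓝 0) :=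
    ((continuous_id.mul Real.continuous_mul_log).tendsto' 0 0 (zero_mul _)).mono_left
      nhdsWithin_le_nhds
  have hsq : Tendsto (fun v => v ^ 2 * (Real.log S - Real.log (Real.sqrt (2 * Real.pi)))) (𝓝[>] 0)
      (𝓝 0) :=
    (Continuous.tendsto' (by fun_prop) 0 0 (by ring)).mono_left nhdsWithin_le_nhds
  have hquot : Tendsto (fun v => (Real.log (S / K) / (1 - v) + v ^ 2 / 2) ^ 2 / 2) (𝓝[>] 0)
      (𝓝 (Real.log (S / K) ^ 2 / 2)) := by
    have hcont : ContinuousAt (fun v => (Real.log (S / K) / (1 - v) + v ^ 2 / 2) ^ 2 / 2) 0 := by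
      fun_prop (disch := norm_num)
    convert hcont.tendsto.mono_left nhdsWithin_le_nhds using 2
    ring
  have hlower := ((hlog.const_mul 2).add hsq).sub hquot
  have hupper := (hlog.add hsq).sub_const (Real.log (S / K) ^ 2 / 2)
  rw [mul_zero, zero_add, zero_sub] at hlower
  rw [zero_add, zero_sub] at hupper
  refine tendsto_of_tendsto_of_tendsto_of_le_of_le' hlower hupper ?_ ?_
  · filter_upwards [Ioo_mem_nhdsGT one_pos] with v hv
    exact le_sq_mul_log_bsTotalVolPut hK hKS hv.1 hv.2
  · filter_upwards [self_mem_nhdsWithin] with v hv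
    exact sq_mul_log_bsTotalVolPut_le hK hKS hv

end TotalVolatility

theorem tendsto_impliedVol_of_tendsto_mul_log_bsPut {S K c : ℝ} (hK : 0 < K) (hKS : K < S)
    (hc : 0 < c) {σ : ℝ → ℝ} (hσ : ∀ᶠ τ in 𝓝[>] 0, 0 < σ τ)
    (hput : Tendsto (fun τ => τ * Real.log (bsPut S K τ (σ τ))) (𝓝[>] 0) (𝓝 (-c))) :
    Tendsto σ (𝓝[>] 0) (𝓝 (Real.log (S / K) / Real.sqrt (2 * c))) := by
  have hτ : ∀ᶠ τ : ℝ in 𝓝[>] 0, 0 < τ := self_mem_nhdsWithin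
  have hv : ∀ᶠ τ in 𝓝[>] 0, 0 < σ τ * Real.sqrt τ := by
    filter_upwards [hσ, hτ] with τ hσ hτ using mul_pos hσ (Real.sqrt_pos.2 hτ)
  have hput' : Tendsto (fun τ => τ * Real.log (bsTotalVolPut S K (σ τ * Real.sqrt τ))) (𝓝[>] 0)
      (𝓝 (-c)) := by
    refine hput.congr' ?_
    filter_upwards [hτ] with τ hτ
    rw [bsPut_eq_bsTotalVolPut S K (σ τ) hτ.le]
  have hv0 : Tendsto (fun τ => σ τ * Real.sqrt τ) (𝓝[>] 0) (𝓝[>] 0) :=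
    tendsto_nhdsGT_of_monotoneOn (strictMonoOn_bsTotalVolPut (hK.trans hKS) hK).monotoneOn
      (fun _ => bsTotalVolPut_pos hK hKS) hv <|
        tendsto_zero_of_tendsto_mul_log hc (hv.mono fun _ => bsTotalVolPut_pos hK hKS) hput'
  have hsq : Tendsto (fun τ => σ τ ^ 2) (𝓝[>] 0) (𝓝 (Real.log (S / K) ^ 2 / (2 * c))) := by
    have hquot := ((tendsto_sq_mul_log_bsTotalVolPut hK hKS).comp hv0).div hput'
      (neg_ne_zero.2 hc.ne')
    rw [neg_div_neg_eq, div_div] at hquot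
    refine hquot.congr' ?_
    filter_upwards [hτ, hput'.eventually_ne (neg_ne_zero.2 hc.ne')] with τ hτ hne
    simp only [Pi.div_apply, Function.comp_apply, mul_pow, Real.sq_sqrt hτ.le]
    rw [mul_assoc, mul_div_cancel_right₀ _ hne]
  have hsqrt := hsq.sqrt
  rw [Real.sqrt_div (sq_nonneg _), Real.sqrt_sq (log_div_pos_of_lt hK hKS).le] at hsqrt
  exact hsqrt.congr' (hσ.mono fun τ hσ => Real.sqrt_sq hσ.le)

section PCLVG

variable {σ1 σ2 U K : ℝ}

lemma pclvgPut_of_lt (hK : K < U) (τ : ℝ) :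
    pclvgPut σ1 σ2 U K τ = τ * (Real.exp (-(U - K) / (σ1 * τ)) *
      ((1 - Real.exp (-2 * K / (σ1 * τ))) / pclvgD σ1 σ2 U τ)) := by
  rw [pclvgPut, pclvgCall, if_pos hK]
  ring

lemma tendsto_one_sub_exp_div_pclvgD (hU : 0 < U) (h1 : 0 < σ1) (h2 : 0 < σ2) (hK : 0 < K) :
    Tendsto (fun τ => (1 - Real.exp (-2 * K / (σ1 * τ))) / pclvgD σ1 σ2 U τ) (𝓝[>] 0)
      (𝓝 (1 / (1 / σ1 + 1 / σ2))) := by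
  have hexp {x : ℝ} (hx : 0 < x) :
      Tendsto (fun τ => Real.exp (-2 * x / (σ1 * τ))) (𝓝[>] 0) (𝓝 0) := by
    simpa only [div_div] using
      tendsto_exp_div_nhdsGT_zero (div_neg_of_neg_of_pos (by linarith : -2 * x < 0) h1)
  have hnum := (hexp hK).const_sub 1
  have hden := ((hexp hU).const_mul (1 / σ2 - 1 / σ1)).const_sub (1 / σ1 + 1 / σ2)
  rw [mul_zero, sub_zero] at hden
  rw [sub_zero] at hnum
  exact hnum.div hden (by positivity)

lemma tendsto_mul_log_pclvgPut (h1 : 0 < σ1) (h2 : 0 < σ2) (hK0 : 0 < K) (hK : K < U) :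
    Tendsto (fun τ => τ * Real.log (pclvgPut σ1 σ2 U K τ)) (𝓝[>] 0) (𝓝 (-((U - K) / σ1))) := by
  have hq := tendsto_one_sub_exp_div_pclvgD (hK0.trans hK) h1 h2 hK0
  have hA : 0 < 1 / (1 / σ1 + 1 / σ2) := by positivity
  have hτ : Tendsto (fun τ : ℝ => τ) (𝓝[>] 0) (𝓝 0) := tendsto_id.mono_left nhdsWithin_le_nhds
  have hτlog : Tendsto (fun τ : ℝ => τ * Real.log τ) (𝓝[>] 0) (𝓝 0) :=
    (Real.continuous_mul_log.tendsto' 0 0 (zero_mul _)).mono_left nhdsWithin_le_nhds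
  have hlim := (hτlog.add_const (-((U - K) / σ1))).add (hτ.mul (hq.log hA.ne'))
  rw [zero_add, zero_mul, add_zero] at hlim
  refine hlim.congr' ?_
  filter_upwards [self_mem_nhdsWithin, hq.eventually_ne hA.ne'] with τ hτ hne
  have hτ0 : τ ≠ 0 := ne_of_gt hτ
  rw [pclvgPut_of_lt hK, Real.log_mul hτ0 (mul_ne_zero (Real.exp_ne_zero _) hne),
    Real.log_mul (Real.exp_ne_zero _) hne, Real.log_exp]
  field_simp
  ring

end PCLVG

/-- Short-maturity asymptotics of the PCLVG implied volatility for an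
out-of-the-money put strike `K < U`:
`lim_{τ→0+} Σ(τ) = √σ₁ · log(U/K) / √(2(U−K))`. -/
theorem pclvg_implied_vol_short_term_OTM_put (U σ1 σ2 K : ℝ)
    (hU : 0 < U) (h1 : 0 < σ1) (h2 : 0 < σ2) (hK0 : 0 < K) (hK : K < U)
    (IV : ℝ → ℝ) (hpos : ∀ τ : ℝ, 0 < τ → 0 < IV τ)
    (hiv : ∀ τ : ℝ, 0 < τ → bsCall U K τ (IV τ) = pclvgCall σ1 σ2 U K τ) :
    Filter.Tendsto IV (nhdsWithin 0 (Set.Ioi 0))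
      (nhds (Real.sqrt σ1 * Real.log (U / K) / Real.sqrt (2 * (U - K)))) := by
  have hput : ∀ τ, 0 < τ → bsPut U K τ (IV τ) = pclvgPut σ1 σ2 U K τ := fun τ hτ => by
    rw [bsPut, hiv τ hτ, pclvgPut, sub_sub_eq_add_sub, sub_add_eq_add_sub]
  have hlog : Tendsto (fun τ => τ * Real.log (bsPut U K τ (IV τ))) (𝓝[>] 0)
      (𝓝 (-((U - K) / σ1))) := by
    refine (tendsto_mul_log_pclvgPut h1 h2 hK0 hK).congr' ?_
    filter_upwards [self_mem_nhdsWithin] with τ hτ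
    rw [hput τ hτ]
  have hIV : ∀ᶠ τ in 𝓝[>] 0, 0 < IV τ := by
    filter_upwards [self_mem_nhdsWithin] with τ hτ using hpos τ hτ
  have hlim := tendsto_impliedVol_of_tendsto_mul_log_bsPut hK0 hK
    (div_pos (sub_pos.2 hK) h1) hIV hlog
  rwa [← mul_div_assoc, Real.sqrt_div' _ h1.le, div_div_eq_mul_div, mul_comm (Real.log _)] at hlim
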